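/- Let n ≥ 3 and let v : ℝ^n → ℝ^n be defined by the components v_1 = 0, v_{j+1} = Σ_{i=1}^{j} x_i x_n^{j-i} for j = 1,…,n-2, and v_n = -1. Let H be the n×n real symmetric matrix with entries H_{j,k} = ∂²Φ/∂x_j∂x_k where Φ(x_1,…,x_n) = Σ_{0<j<j+k≤n} x_j x_k x_n^{n-j-k}. Then H·v = 0 at every point (x_1,…,x_n) ∈ ℝ^n. -/

import Mathlib

open scoped BigOperators

/-- Hessian matrix of a function on `ℝⁿ` with respect to the standard basis. -/
noncomputable def hess {n : ℕ} (Φ : (Fin n → ℝ) → ℝ) (x : Fin n → ℝ) :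
    Matrix (Fin n) (Fin n) ℝ :=
  fun j k => fderiv ℝ (fun y => fderiv ℝ Φ y (Pi.single k 1)) x (Pi.single j 1)


lemma aux_d1 {n : ℕ} (j k l : Fin n) (m : ℕ) (c : Prop) [Decidable c] (y w : Fin n → ℝ) :
    DifferentiableAt ℝ (fun y : Fin n → ℝ => if c then y j * y k * y l ^ m else 0) y ∧
    fderiv ℝ (fun y : Fin n → ℝ => if c then y j * y k * y l ^ m else 0) y w =
      if c then (w j * y k + y j * w k) * y l ^ m
        + y j * y k * (m * y l ^ (m - 1)) * w l else 0 := by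
  by_cases hc : c
  · simp only [hc, if_true]
    have hp (i : Fin n) : HasFDerivAt (fun y : Fin n → ℝ => y i)
      (ContinuousLinearMap.proj (R := ℝ) (φ := fun _ : Fin n => ℝ) i) y := hasFDerivAt_apply i y
    have h := ((hp j).mul (hp k)).mul ((hp l).pow m)
    refine ⟨h.differentiableAt, ?_⟩
    have h2 := h.fderiv
    erw [h2]
    simp
    ring
  · simp [hc]

lemma aux_d2 {n : ℕ} (j k l : Fin n) (m : ℕ) (c : Prop) [Decidable c] (y w e : Fin n → ℝ) :
    DifferentiableAt ℝ (fun y : Fin n → ℝ => if c then (w j * y k + y j * w k) * y l ^ m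
        + y j * y k * (m * y l ^ (m - 1)) * w l else 0) y ∧
    fderiv ℝ (fun y : Fin n → ℝ => if c then (w j * y k + y j * w k) * y l ^ m
        + y j * y k * (m * y l ^ (m - 1)) * w l else 0) y e =
      if c then (w j * e k + e j * w k) * y l ^ m
        + (w j * y k + y j * w k) * (m * y l ^ (m - 1)) * e l
        + (e j * y k + y j * e k) * (m * y l ^ (m - 1)) * w l
        + y j * y k * (m * ((m - 1 : ℕ) * y l ^ (m - 1 - 1))) * e l * w l else 0 := by
  by_cases hc : c
  · simp only [hc, if_true]
    have hp (i : Fin n) : HasFDerivAt (fun y : Fin n → ℝ => y i)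
      (ContinuousLinearMap.proj (R := ℝ) (φ := fun _ : Fin n => ℝ) i) y := hasFDerivAt_apply i y
    have h := ((((hp k).const_mul (w j)).add ((hp j).mul_const (w k))).mul ((hp l).pow m)).add
      ((((hp j).mul (hp k)).mul (((hp l).pow (m - 1)).const_mul (m : ℝ))).mul_const (w l))
    refine ⟨h.differentiableAt, ?_⟩
    have h2 := h.fderiv
    erw [h2]
    simp
    ring
  · simp [hc]

lemma aux_c1 (N n : ℕ) (h : N + 1 ≤ n) (a : ℕ → ℝ) (C : PowerSeries ℝ) :
    PowerSeries.coeff N (PowerSeries.mk a * C) =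
      ∑ j ∈ Finset.range n, if j ≤ N then a j * PowerSeries.coeff (N - j) C else 0 := by
  rw [PowerSeries.coeff_mul, Finset.Nat.sum_antidiagonal_eq_sum_range_succ_mk,
    ← Finset.sum_filter]
  simp only [PowerSeries.coeff_mk]
  refine Finset.sum_congr ?_ fun _ _ => rfl
  ext i
  simp
  omega

lemma aux_c2 (n : ℕ) (hn : 2 ≤ n) (a b g : ℕ → ℝ) :
    (∑ j : Fin n, ∑ k : Fin n, if (j : ℕ) + (k : ℕ) + 2 ≤ n then
      a j * b k * g (n - 2 - j - k) else 0) =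
    PowerSeries.coeff (n - 2) (PowerSeries.mk a * (PowerSeries.mk b * PowerSeries.mk g)) := by
  rw [aux_c1 (n - 2) n (by omega), Finset.sum_range]
  refine Finset.sum_congr rfl fun j _ => ?_
  by_cases hj : (j : ℕ) ≤ n - 2
  · rw [if_pos hj, aux_c1 (n - 2 - j) n (by omega), Finset.mul_sum, Finset.sum_range]
    refine Finset.sum_congr rfl fun k _ => ?_
    by_cases hk : (j : ℕ) + (k : ℕ) + 2 ≤ n
    · rw [if_pos hk, if_pos (by omega), PowerSeries.coeff_mk]; ring
    · rw [if_neg hk, if_neg (by omega), mul_zero]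
  · rw [if_neg hj]
    refine Finset.sum_eq_zero fun k _ => if_neg (by omega)

lemma aux_G (t : ℝ) :
    (PowerSeries.mk fun m : ℕ => (m : ℝ) * t ^ (m - 1)) =
      PowerSeries.X * (PowerSeries.mk fun m : ℕ => t ^ m) * (PowerSeries.mk fun m : ℕ => t ^ m) ∧
    (PowerSeries.mk fun m : ℕ => (m : ℝ) * (((m - 1 : ℕ) : ℝ) * t ^ (m - 1 - 1))) =
      2 * PowerSeries.X * (PowerSeries.mk fun m : ℕ => (m : ℝ) * t ^ (m - 1)) *
        (PowerSeries.mk fun m : ℕ => t ^ m) := by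
  set G : PowerSeries ℝ := PowerSeries.mk fun m : ℕ => t ^ m with hG
  set G1 : PowerSeries ℝ := PowerSeries.mk fun m : ℕ => (m : ℝ) * t ^ (m - 1) with hG1
  set G2 : PowerSeries ℝ :=
    PowerSeries.mk fun m : ℕ => (m : ℝ) * (((m - 1 : ℕ) : ℝ) * t ^ (m - 1 - 1)) with hG2
  have h0 : G = 1 + PowerSeries.C t * (G * PowerSeries.X) := by
    ext m
    rcases m with _ | m
    · simp [hG]
    · simp [hG, PowerSeries.coeff_succ_mul_X, PowerSeries.coeff_one, pow_succ']
  have h1 : G1 = G * PowerSeries.X + PowerSeries.C t * (G1 * PowerSeries.X) := by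
    ext m
    rcases m with _ | _ | m
    · simp [hG1]
    · simp [hG, hG1, PowerSeries.coeff_succ_mul_X]
    · simp [hG, hG1, PowerSeries.coeff_succ_mul_X]
      ring
  have h2 : G2 = PowerSeries.C 2 * (G1 * PowerSeries.X)
      + PowerSeries.C t * (G2 * PowerSeries.X) := by
    ext m
    rcases m with _ | _ | _ | m
    · simp [hG2]
    · simp [hG1, hG2, PowerSeries.coeff_succ_mul_X]
    · simp only [map_add, PowerSeries.coeff_C_mul, PowerSeries.coeff_succ_mul_X]
      simp [hG1, hG2]
    · simp only [map_add, PowerSeries.coeff_C_mul, PowerSeries.coeff_succ_mul_X]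
      simp [hG1, hG2]
      ring
  have hC : (PowerSeries.C (2 : ℝ) : PowerSeries ℝ) = 2 := map_ofNat _ 2
  rw [hC] at h2
  constructor
  · linear_combination G * h1 - G1 * h0
  · linear_combination G * h2 - G2 * h0

lemma aux_final (n : ℕ) (hn : 2 ≤ n) (x e w : ℕ → ℝ) (t el : ℝ)
    (hw : ∀ p, p + 2 ≤ n → w p = PowerSeries.coeff p
      (PowerSeries.X * PowerSeries.mk x * PowerSeries.mk fun m => t ^ m)) :
    (∑ j : Fin n, ∑ k : Fin n, if (j : ℕ) + (k : ℕ) + 2 ≤ n then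
      (w j * e k + e j * w k) * t ^ (n - 2 - (j : ℕ) - (k : ℕ))
        + (w j * x k + x j * w k) * ((n - 2 - (j : ℕ) - (k : ℕ) : ℕ) *
          t ^ (n - 2 - (j : ℕ) - (k : ℕ) - 1)) * el
        + (e j * x k + x j * e k) * ((n - 2 - (j : ℕ) - (k : ℕ) : ℕ) *
          t ^ (n - 2 - (j : ℕ) - (k : ℕ) - 1)) * (-1)
        + x j * x k * ((n - 2 - (j : ℕ) - (k : ℕ) : ℕ) *
          ((n - 2 - (j : ℕ) - (k : ℕ) - 1 : ℕ) *
          t ^ (n - 2 - (j : ℕ) - (k : ℕ) - 1 - 1))) * el * (-1) else 0) = 0 := by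
  obtain ⟨hG1, hG2⟩ := aux_G t
  set G : PowerSeries ℝ := PowerSeries.mk fun m : ℕ => t ^ m with hG
  set W := PowerSeries.X * PowerSeries.mk x * G with hW
  set u : ℕ → ℝ := fun p => PowerSeries.coeff p W with hu
  have hWu : PowerSeries.mk u = W := by ext p; simp [hu]
  set g0 : ℕ → ℝ := fun m => t ^ m with hg0
  set g1 : ℕ → ℝ := fun m => (m : ℝ) * t ^ (m - 1) with hg1
  set g2 : ℕ → ℝ := fun m => (m : ℝ) * (((m - 1 : ℕ) : ℝ) * t ^ (m - 1 - 1)) with hg2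
  set S : (ℕ → ℝ) → (ℕ → ℝ) → (ℕ → ℝ) → ℝ := fun a b g =>
    ∑ j : Fin n, ∑ k : Fin n, if (j : ℕ) + (k : ℕ) + 2 ≤ n then
      a j * b k * g (n - 2 - j - k) else 0 with hS
  have hSc (a b g) : S a b g = PowerSeries.coeff (n - 2)
    (PowerSeries.mk a * (PowerSeries.mk b * PowerSeries.mk g)) := aux_c2 n hn a b g
  trans S u e g0 + S e u g0 + el * (S u x g1 + S x u g1) - (S e x g1 + S x e g1) - el * S x x g2
  · simp only [hS, Finset.mul_sum, ← Finset.sum_add_distrib, ← Finset.sum_sub_distrib]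
    refine Finset.sum_congr rfl fun j _ => Finset.sum_congr rfl fun k _ => ?_
    by_cases hk : (j : ℕ) + (k : ℕ) + 2 ≤ n
    · simp only [hk, if_true]
      rw [hw j (by omega), hw k (by omega)]
      simp only [hu, hg0, hg1, hg2]
      ring
    · simp [hk]
  · simp only [hSc, hWu, hG1, hG2, ← PowerSeries.coeff_C_mul, ← map_add, ← map_sub]
    rw [← map_zero (PowerSeries.coeff (R := ℝ) (n - 2))]
    congr 1
    rw [hW, ← hG]
    ring

/-- The Hessian of `Φ(x) = Σ_{0<j<j+k≤n} x_j x_k x_n^{n-j-k}` annihilates the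
explicit kernel vector `v` (with `v_1 = 0`, `v_{j+1} = Σ_{i=1}^{j} x_i x_n^{j-i}`,
`v_n = -1`) at every point of `ℝⁿ`.  Indices are 0-based in the formalization:
coordinate `i : Fin n` is `x_{i+1}`. -/
theorem hessian_mulVec_kernel_eq_zero (n : ℕ) (hn : 3 ≤ n)
    (Φ : (Fin n → ℝ) → ℝ)
    (hΦ : Φ = fun x => ∑ j : Fin n, ∑ k : Fin n,
      if (j : ℕ) + (k : ℕ) + 2 ≤ n then
        x j * x k * (x ⟨n - 1, by omega⟩) ^ (n - 2 - (j : ℕ) - (k : ℕ)) else 0)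
    (v : (Fin n → ℝ) → Fin n → ℝ)
    (hv : v = fun (x : Fin n → ℝ) (p : Fin n) =>
      if (p : ℕ) = 0 then 0
      else if (p : ℕ) = n - 1 then -1
      else ∑ i : Fin n, if (i : ℕ) < (p : ℕ) then
        x i * (x ⟨n - 1, by omega⟩) ^ ((p : ℕ) - 1 - (i : ℕ)) else 0) :
    ∀ x : Fin n → ℝ, (hess Φ x).mulVec (v x) = 0 := by
  subst hΦ hv
  intro x
  set l : Fin n := ⟨n - 1, by omega⟩ with hl
  funext i
  have key (w e : Fin n → ℝ) : fderiv ℝ (fun y => fderiv ℝ (fun x : Fin n → ℝ =>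
      ∑ j : Fin n, ∑ k : Fin n, if (j : ℕ) + (k : ℕ) + 2 ≤ n then
        x j * x k * x l ^ (n - 2 - (j : ℕ) - (k : ℕ)) else 0) y w) x e =
      ∑ j : Fin n, ∑ k : Fin n, if (j : ℕ) + (k : ℕ) + 2 ≤ n then
      (w j * e k + e j * w k) * x l ^ (n - 2 - (j : ℕ) - (k : ℕ))
        + (w j * x k + x j * w k) * ((n - 2 - (j : ℕ) - (k : ℕ) : ℕ) *
          x l ^ (n - 2 - (j : ℕ) - (k : ℕ) - 1)) * e l
        + (e j * x k + x j * e k) * ((n - 2 - (j : ℕ) - (k : ℕ) : ℕ) *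
          x l ^ (n - 2 - (j : ℕ) - (k : ℕ) - 1)) * w l
        + x j * x k * ((n - 2 - (j : ℕ) - (k : ℕ) : ℕ) *
          ((n - 2 - (j : ℕ) - (k : ℕ) - 1 : ℕ) *
          x l ^ (n - 2 - (j : ℕ) - (k : ℕ) - 1 - 1))) * e l * w l else 0 := by
    have h1 : (fun y => fderiv ℝ (fun x : Fin n → ℝ =>
      ∑ j : Fin n, ∑ k : Fin n, if (j : ℕ) + (k : ℕ) + 2 ≤ n then
        x j * x k * x l ^ (n - 2 - (j : ℕ) - (k : ℕ)) else 0) y w) = fun y =>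
      ∑ j : Fin n, ∑ k : Fin n, if (j : ℕ) + (k : ℕ) + 2 ≤ n then
      (w j * y k + y j * w k) * y l ^ (n - 2 - (j : ℕ) - (k : ℕ))
        + y j * y k * ((n - 2 - (j : ℕ) - (k : ℕ) : ℕ) *
          y l ^ (n - 2 - (j : ℕ) - (k : ℕ) - 1)) * w l else 0 := by
      funext y
      rw [fderiv_fun_sum fun j _ => DifferentiableAt.fun_sum fun k _ => (aux_d1 _ _ _ _ _ y w).1,
        sum_apply]
      refine Finset.sum_congr rfl fun j _ => ?_
      rw [fderiv_fun_sum fun k _ => (aux_d1 _ _ _ _ _ y w).1, sum_apply]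
      exact Finset.sum_congr rfl fun k _ => (aux_d1 _ _ _ _ _ y w).2
    rw [h1]
    rw [fderiv_fun_sum fun j _ => DifferentiableAt.fun_sum fun k _ => (aux_d2 _ _ _ _ _ x w e).1,
      sum_apply]
    refine Finset.sum_congr rfl fun j _ => ?_
    rw [fderiv_fun_sum fun k _ => (aux_d2 _ _ _ _ _ x w e).1, sum_apply]
    exact Finset.sum_congr rfl fun k _ => (aux_d2 _ _ _ _ _ x w e).2
  set v : Fin n → ℝ := fun p : Fin n =>
      if (p : ℕ) = 0 then 0
      else if (p : ℕ) = n - 1 then -1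
      else ∑ i : Fin n, if (i : ℕ) < (p : ℕ) then
        x i * (x l) ^ ((p : ℕ) - 1 - (i : ℕ)) else 0 with hv
  set e : Fin n → ℝ := Pi.single i 1 with he
  have hvl : v l = -1 := by
    simp only [hv, hl]
    rw [if_neg (by omega), if_pos trivial]
  -- extension of vectors to functions on the naturals
  set ext : (Fin n → ℝ) → ℕ → ℝ := fun y p => if h : p < n then y ⟨p, h⟩ else 0 with hext
  have hex (y : Fin n → ℝ) (p : Fin n) : ext y p = y p := by simp [hext]
  have hfin := aux_final n (by omega) (ext x) (ext e) (ext v) (x l) (e l) (by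
    intro p hp
    rw [show ext v p = v ⟨p, by omega⟩ from hex v ⟨p, by omega⟩]
    rcases p with _ | p
    · simp [hv, mul_assoc]
    · rw [mul_assoc, PowerSeries.coeff_succ_X_mul, aux_c1 p n (by omega), Finset.sum_range]
      simp only [hv]
      rw [if_neg (by omega), if_neg (by omega)]
      refine Finset.sum_congr rfl fun q _ => ?_
      rw [hex, PowerSeries.coeff_mk]
      by_cases hq : (q : ℕ) ≤ p
      · rw [if_pos hq, if_pos (by omega)]; simp
      · rw [if_neg hq, if_neg (by omega)])
  simp only [hex] at hfin
  rw [← hvl] at hfin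
  change ∑ k, fderiv ℝ (fun y => fderiv ℝ _ y (Pi.single k 1)) x e * v k = 0
  refine Eq.trans ?_ hfin
  -- linearity in the inner direction
  refine (Finset.sum_congr rfl fun k _ =>
    congrArg (fun z => z * v k) (key (Pi.single k 1) e)).trans ?_
  simp only [Finset.sum_mul]
  rw [Finset.sum_comm]
  refine Finset.sum_congr rfl fun j _ => ?_
  rw [Finset.sum_comm]
  refine Finset.sum_congr rfl fun k _ => ?_
  by_cases hk : (j : ℕ) + (k : ℕ) + 2 ≤ n
  · simp only [hk, if_true]
    have hs (q : Fin n) : v q = ∑ p : Fin n, (Pi.single p 1 : Fin n → ℝ) q * v p := by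
      simp [Pi.single_apply]
    rw [hs j, hs k, hs l]
    simp only [Finset.sum_mul, Finset.mul_sum, ← Finset.sum_add_distrib]
    refine Finset.sum_congr rfl fun p _ => ?_
    ring
  · simp [hk]
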